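/- arXiv:2108.10627 — 2 statements merged into one kernel-verified Lean document; each statement's English description precedes it below -/
import Mathlib

section
/- Let c > 0, v ∈ ℝ³ with |v|² < c², and p' ∈ ℝ with 0 < p' ≤ c². Define B₁ := c⁴ + 3p'|v|², B₂ := c⁴ + 2c²p' + p'|v|², B₃ := c²(c² + 3p'), B₄ := c²p'(c² − |v|²). Then (B₃ − B₂²/B₁)|v|² + B₄ = p'(c² − |v|²)²(c⁴ − p'|v|²)/(c⁴ + 3p'|v|²), and this quantity is strictly positive. -/
/-!
Write `a = c²` and `s = |v|²`. The determinant `B₃ B₁ - B₂²` is divisible by `p (a - s)`, and so is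
`B₄ = a p (a - s)`. Hence `p (a - s)` can be taken out of `(B₃ - B₂² / B₁) s + B₄`, and the
remaining cofactor over `B₁` factors once more as `(a - s) (a² - p s)`. The sign is therefore that
of `a² - p s`, which is positive because `p ≤ a` and `s < a`.
-/

section Identity

theorem mul_sub_sq_eq_neg_mul_sub_mul {R : Type*} [CommRing R] (a p s : R) :
    a * (a + 3 * p) * (a ^ 2 + 3 * p * s) - (a ^ 2 + 2 * a * p + p * s) ^ 2 =
      -(p * (a - s) * (a ^ 2 + p * (4 * a - s))) := by
  ring

variable {K : Type*} [Field K] {a p s : K}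

theorem schurComplement_eq_neg_div (hB₁ : a ^ 2 + 3 * p * s ≠ 0) :
    a * (a + 3 * p) - (a ^ 2 + 2 * a * p + p * s) ^ 2 / (a ^ 2 + 3 * p * s) =
      -(p * (a - s) * (a ^ 2 + p * (4 * a - s))) / (a ^ 2 + 3 * p * s) := by
  rw [sub_div' hB₁, mul_sub_sq_eq_neg_mul_sub_mul]

theorem schurComplement_mul_add_eq_div (hB₁ : a ^ 2 + 3 * p * s ≠ 0) :
    (a * (a + 3 * p) - (a ^ 2 + 2 * a * p + p * s) ^ 2 / (a ^ 2 + 3 * p * s)) * s +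
        a * p * (a - s) =
      p * (a - s) ^ 2 * (a ^ 2 - p * s) / (a ^ 2 + 3 * p * s) := by
  have cofactor_eq : a * (a ^ 2 + 3 * p * s) - (a ^ 2 + p * (4 * a - s)) * s =
      (a - s) * (a ^ 2 - p * s) := by
    ring
  calc
    _ = -(p * (a - s) * (a ^ 2 + p * (4 * a - s))) / (a ^ 2 + 3 * p * s) * s +
          a * p * (a - s) := by
      rw [schurComplement_eq_neg_div hB₁]
    _ = p * (a - s) * (a * (a ^ 2 + 3 * p * s) - (a ^ 2 + p * (4 * a - s)) * s) /
          (a ^ 2 + 3 * p * s) := by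
      rw [div_mul_eq_mul_div, div_add' _ _ _ hB₁]
      ring
    _ = p * (a - s) ^ 2 * (a ^ 2 - p * s) / (a ^ 2 + 3 * p * s) := by
      rw [cofactor_eq]
      ring

end Identity

section Positivity

variable {K : Type*} [Field K] [LinearOrder K] [IsStrictOrderedRing K] {a p s : K}

theorem mul_sub_sq_mul_sub_div_pos_iff (hp : 0 < p) (hsa : s ≠ a)
    (hB₁ : 0 < a ^ 2 + 3 * p * s) :
    0 < p * (a - s) ^ 2 * (a ^ 2 - p * s) / (a ^ 2 + 3 * p * s) ↔ p * s < a ^ 2 := by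
  have factor_pos : 0 < p * (a - s) ^ 2 := mul_pos hp (sq_pos_of_ne_zero (sub_ne_zero.2 hsa.symm))
  rw [div_pos_iff_of_pos_right hB₁, mul_pos_iff_of_pos_left factor_pos, sub_pos]

theorem third_eigenvalue_identity_general (hp : 0 < p) (hs : 0 ≤ s) (hsa : s ≠ a)
    (hps : p * s < a ^ 2) :
    (a * (a + 3 * p) - (a ^ 2 + 2 * a * p + p * s) ^ 2 / (a ^ 2 + 3 * p * s)) * s +
        a * p * (a - s) =
      p * (a - s) ^ 2 * (a ^ 2 - p * s) / (a ^ 2 + 3 * p * s) ∧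
    0 < p * (a - s) ^ 2 * (a ^ 2 - p * s) / (a ^ 2 + 3 * p * s) := by
  have ps_nonneg : 0 ≤ p * s := mul_nonneg hp.le hs
  have hB₁ : 0 < a ^ 2 + 3 * p * s := by linarith
  exact ⟨schurComplement_mul_add_eq_div hB₁.ne', (mul_sub_sq_mul_sub_div_pos_iff hp hsa hB₁).2 hps⟩

end Positivity

theorem third_eigenvalue_identity (c p' : ℝ) (v : EuclideanSpace ℝ (Fin 3))
    (hc : 0 < c) (hv : ‖v‖ ^ 2 < c ^ 2) (hp0 : 0 < p') (hpc : p' ≤ c ^ 2) :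
    ((c ^ 2 * (c ^ 2 + 3 * p') -
        (c ^ 4 + 2 * c ^ 2 * p' + p' * ‖v‖ ^ 2) ^ 2 / (c ^ 4 + 3 * p' * ‖v‖ ^ 2)) * ‖v‖ ^ 2 +
      c ^ 2 * p' * (c ^ 2 - ‖v‖ ^ 2)) =
      p' * (c ^ 2 - ‖v‖ ^ 2) ^ 2 * (c ^ 4 - p' * ‖v‖ ^ 2) / (c ^ 4 + 3 * p' * ‖v‖ ^ 2) ∧
    0 < p' * (c ^ 2 - ‖v‖ ^ 2) ^ 2 * (c ^ 4 - p' * ‖v‖ ^ 2) / (c ^ 4 + 3 * p' * ‖v‖ ^ 2) := by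
  have hps : p' * ‖v‖ ^ 2 < (c ^ 2) ^ 2 := by
    rw [sq (c ^ 2)]
    exact mul_lt_mul' hpc hv (sq_nonneg _) (pow_pos hc 2)
  rw [show c ^ 4 = (c ^ 2) ^ 2 from pow_mul c 2 2]
  exact third_eigenvalue_identity_general hp0 (sq_nonneg _) hv.ne hps
end

section
/- Let c > 0 and Φ : D → (0,∞) be C¹ with Φ' < 0 on an open interval D. Then the map w(ρ,v) = (−c³Φ(ρ)/√(c² − |v|²) + c², cΦ(ρ)v/√(c² − |v|²)) is a C¹ diffeomorphism from the open set Ω := D × {v ∈ ℝ³ : |v|² < c²} onto its image w(Ω). -/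
/-!
The map `w` is a composition of four diffeomorphisms. With `s(v) = √(c² - |v|²)` they are
`(ρ, v) ↦ (Φ(ρ), v)`, then `(r, v) ↦ (r / s(v), v)`, then `(p, v) ↦ (p, p v)`, and finally the
affine map `(p, y) ↦ (c² - c³ p, c y)`. The last three have explicit inverses, the third one because
`p = Φ(ρ) / s(v)` does not vanish, so only the first one needs the inverse function theorem, in
dimension one. Nothing about `s` matters except that it is smooth and has no zero.
-/

open Set Topology

section IsDiffeoOn

variable {𝕜 : Type*} [NontriviallyNormedField 𝕜]
  {E : Type*} [NormedAddCommGroup E] [NormedSpace 𝕜 E]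
  {F : Type*} [NormedAddCommGroup F] [NormedSpace 𝕜 F]
  {G : Type*} [NormedAddCommGroup G] [NormedSpace 𝕜 G]
  {H : Type*} [NormedAddCommGroup H] [NormedSpace 𝕜 H]
  {n : WithTop ℕ∞}

variable (𝕜 n) in
/-- `f` is a `C^n` diffeomorphism from `s` onto the open set `f '' s`. The inverse is a function on
the whole space of which only the values on `f '' s` matter. -/
structure IsDiffeoOn (f : E → F) (s : Set E) : Prop where
  contDiffOn : ContDiffOn 𝕜 n f s
  isOpen_image : IsOpen (f '' s)
  exists_leftInvOn : ∃ g : F → E, ContDiffOn 𝕜 n g (f '' s) ∧ LeftInvOn g f s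

namespace IsDiffeoOn

theorem injOn {f : E → F} {s : Set E} (hf : IsDiffeoOn 𝕜 n f s) : InjOn f s :=
  let ⟨_, _, hg⟩ := hf.exists_leftInvOn
  hg.injOn

theorem of_invOn {f : E → F} {g : F → E} {s : Set E} {t : Set F} (hf : ContDiffOn 𝕜 n f s)
    (hg : ContDiffOn 𝕜 n g t) (ht : IsOpen t) (hst : MapsTo f s t) (hts : MapsTo g t s)
    (hinv : InvOn g f s t) : IsDiffeoOn 𝕜 n f s := by
  have himage : f '' s = t := (hinv.bijOn hst hts).image_eq
  exact ⟨hf, himage ▸ ht, g, himage ▸ hg, hinv.1⟩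

protected theorem id {s : Set E} (hs : IsOpen s) : IsDiffeoOn 𝕜 n id s :=
  of_invOn contDiffOn_id contDiffOn_id hs (mapsTo_id s) (mapsTo_id s)
    ⟨fun _ _ ↦ rfl, fun _ _ ↦ rfl⟩

theorem isOpen_image_of_subset {f : E → F} {s u : Set E} (hf : IsDiffeoOn 𝕜 n f s) (hu : IsOpen u)
    (hus : u ⊆ s) : IsOpen (f '' u) := by
  obtain ⟨g, hg, hgf⟩ := hf.exists_leftInvOn
  have himage : f '' u = f '' s ∩ g ⁻¹' u := by
    rw [inter_comm, ← hgf.image_inter', inter_eq_left.2 hus]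
  exact himage ▸ hg.continuousOn.isOpen_inter_preimage hf.isOpen_image hu

protected theorem comp {g : F → G} {f : E → F} {s : Set E} {t : Set F} (hg : IsDiffeoOn 𝕜 n g t)
    (hf : IsDiffeoOn 𝕜 n f s) (hst : MapsTo f s t) : IsDiffeoOn 𝕜 n (g ∘ f) s := by
  obtain ⟨g', hg', hg'g⟩ := hg.exists_leftInvOn
  obtain ⟨f', hf', hf'f⟩ := hf.exists_leftInvOn
  refine ⟨hg.contDiffOn.comp hf.contDiffOn hst, ?_, f' ∘ g', ?_, hf'f.comp hg'g hst⟩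
  · exact image_comp g f s ▸ hg.isOpen_image_of_subset hf.isOpen_image hst.image_subset
  · rw [image_comp]
    exact hf'.comp (hg'.mono (image_mono hst.image_subset))
      ((hg'g.mono hst.image_subset).mapsTo (surjOn_image g (f '' s)))

theorem prodMap {f : E → F} {g : G → H} {s : Set E} {t : Set G} (hf : IsDiffeoOn 𝕜 n f s)
    (hg : IsDiffeoOn 𝕜 n g t) : IsDiffeoOn 𝕜 n (Prod.map f g) (s ×ˢ t) := by
  obtain ⟨f', hf', hf'f⟩ := hf.exists_leftInvOn
  obtain ⟨g', hg', hg'g⟩ := hg.exists_leftInvOn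
  have himage : Prod.map f g '' s ×ˢ t = (f '' s) ×ˢ (g '' t) := prodMap_image_prod f g s t
  exact ⟨hf.contDiffOn.prodMap hg.contDiffOn, himage ▸ hf.isOpen_image.prod hg.isOpen_image,
    Prod.map f' g', himage ▸ hf'.prodMap hg', fun z hz ↦ Prod.ext (hf'f hz.1) (hg'g hz.2)⟩

theorem const_add_smul (a : E) {b : 𝕜} (hb : b ≠ 0) :
    IsDiffeoOn 𝕜 n (fun x : E ↦ a + b • x) univ :=
  of_invOn (g := fun y ↦ b⁻¹ • (y - a)) (t := univ) (by fun_prop) (by fun_prop) isOpen_univ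
    (mapsTo_univ _ _) (mapsTo_univ _ _)
    ⟨fun x _ ↦ by simp [hb], fun y _ ↦ by simp [hb]⟩

theorem fst_div_comp_snd {s : E → 𝕜} {U : Set E} (hU : IsOpen U) (hs : ContDiffOn 𝕜 n s U)
    (hs0 : ∀ v ∈ U, s v ≠ 0) :
    IsDiffeoOn 𝕜 n (fun z : 𝕜 × E ↦ (z.1 / s z.2, z.2)) (univ ×ˢ U) := by
  have hs_snd : ContDiffOn 𝕜 n (fun z : 𝕜 × E ↦ s z.2) (univ ×ˢ U) :=
    hs.comp contDiffOn_snd fun z hz ↦ hz.2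
  refine of_invOn (g := fun z ↦ (z.1 * s z.2, z.2)) (t := univ ×ˢ U)
    ((contDiffOn_fst.div hs_snd fun z hz ↦ hs0 z.2 hz.2).prodMk contDiffOn_snd)
    ((contDiffOn_fst.mul hs_snd).prodMk contDiffOn_snd) (isOpen_univ.prod hU)
    (fun z hz ↦ ⟨trivial, hz.2⟩) (fun z hz ↦ ⟨trivial, hz.2⟩) ⟨fun z hz ↦ ?_, fun z hz ↦ ?_⟩
  · exact Prod.ext (div_mul_cancel₀ z.1 (hs0 z.2 hz.2)) rfl
  · exact Prod.ext (mul_div_cancel_right₀ z.1 (hs0 z.2 hz.2)) rfl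

theorem fst_smul_snd : IsDiffeoOn 𝕜 n (fun z : 𝕜 × E ↦ (z.1, z.1 • z.2)) ({0}ᶜ ×ˢ univ) := by
  have hinv : ContDiffOn 𝕜 n (fun z : 𝕜 × E ↦ z.1⁻¹) ({0}ᶜ ×ˢ univ) :=
    contDiffOn_fst.inv fun z hz ↦ hz.1
  exact of_invOn (g := fun z ↦ (z.1, z.1⁻¹ • z.2)) (t := {0}ᶜ ×ˢ univ) (by fun_prop)
    (contDiffOn_fst.prodMk (hinv.smul contDiffOn_snd))
    (isOpen_compl_singleton.prod isOpen_univ) (fun z hz ↦ ⟨hz.1, trivial⟩)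
    (fun z hz ↦ ⟨hz.1, trivial⟩)
    ⟨fun z hz ↦ Prod.ext rfl (inv_smul_smul₀ hz.1 z.2),
      fun z hz ↦ Prod.ext rfl (smul_inv_smul₀ hz.1 z.2)⟩

end IsDiffeoOn

end IsDiffeoOn

section InverseFunctionTheorem

variable {𝕜 : Type*} [RCLike 𝕜]
  {E : Type*} [NormedAddCommGroup E] [NormedSpace 𝕜 E] [CompleteSpace E]
  {F : Type*} [NormedAddCommGroup F] [NormedSpace 𝕜 F]
  {n : WithTop ℕ∞}

theorem IsDiffeoOn.of_injOn_of_hasFDerivAt_equiv {f : E → F} {f' : E → E ≃L[𝕜] F} {s : Set E}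
    (hn : n ≠ 0) (hs : IsOpen s) (hf : ContDiffOn 𝕜 n f s) (hinj : InjOn f s)
    (hf' : ∀ x ∈ s, HasFDerivAt f (f' x : E →L[𝕜] F) x) : IsDiffeoOn 𝕜 n f s := by
  have hf_at : ∀ x ∈ s, ContDiffAt 𝕜 n f x := fun x hx ↦ hf.contDiffAt (hs.mem_nhds hx)
  have hstrict : ∀ x ∈ s, HasStrictFDerivAt f (f' x : E →L[𝕜] F) x := fun x hx ↦
    (hf_at x hx).hasStrictFDerivAt' (hf' x hx) hn
  have hleft : LeftInvOn (Function.invFunOn f s) f s := hinj.leftInvOn_invFunOn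
  refine ⟨hf, isOpen_iff_mem_nhds.2 ?_, Function.invFunOn f s, ?_, hleft⟩
  · rintro _ ⟨x, hx, rfl⟩
    rw [← (hstrict x hx).map_nhds_eq_of_equiv]
    exact Filter.image_mem_map (hs.mem_nhds hx)
  · rintro _ ⟨x, hx, rfl⟩
    have hleft_near : ∀ᶠ y in 𝓝 x, Function.invFunOn f s (f y) = y :=
      Filter.mem_of_superset (hs.mem_nhds hx) hleft
    exact (((hf_at x hx).to_localInverse (hf' x hx) hn).congr_of_eventuallyEq
      ((hstrict x hx).localInverse_unique hleft_near)).contDiffWithinAt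

theorem IsDiffeoOn.of_injOn_of_deriv_ne_zero {f : 𝕜 → 𝕜} {s : Set 𝕜} (hn : n ≠ 0) (hs : IsOpen s)
    (hf : ContDiffOn 𝕜 n f s) (hinj : InjOn f s) (hf' : ∀ x ∈ s, deriv f x ≠ 0) :
    IsDiffeoOn 𝕜 n f s := by
  have hequiv : ∀ x ∈ s, ∃ f' : 𝕜 ≃L[𝕜] 𝕜, HasFDerivAt f (f' : 𝕜 →L[𝕜] 𝕜) x := fun x hx ↦
    ⟨_, (differentiableAt_of_deriv_ne_zero (hf' x hx)).hasDerivAt.hasFDerivAt_equiv (hf' x hx)⟩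
  choose! f' hf' using hequiv
  exact .of_injOn_of_hasFDerivAt_equiv hn hs hf hinj hf'

end InverseFunctionTheorem

theorem injOn_of_deriv_ne_zero {f : ℝ → ℝ} {s : Set ℝ} (hs : s.OrdConnected)
    (hf : ContinuousOn f s) (hf' : ∀ x ∈ s, deriv f x ≠ 0) : InjOn f s := by
  have hne : ∀ a ∈ s, ∀ b ∈ s, a < b → f a ≠ f b := by
    intro a ha b hb hab hfab
    obtain ⟨x, hx, hfx⟩ := exists_deriv_eq_zero hab (hf.mono (hs.out ha hb)) hfab
    exact hf' x (hs.out ha hb (Ioo_subset_Icc_self hx)) hfx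
  intro a ha b hb hfab
  rcases lt_trichotomy a b with hab | hab | hba
  · exact absurd hfab (hne a ha b hb hab)
  · exact hab
  · exact absurd hfab.symm (hne b hb a ha hba)

theorem contDiffOn_one_of_hasDerivAt {𝕜 F : Type*} [NontriviallyNormedField 𝕜]
    [NormedAddCommGroup F] [NormedSpace 𝕜 F] {f f' : 𝕜 → F} {s : Set 𝕜} (hs : IsOpen s)
    (hf : ∀ x ∈ s, HasDerivAt f (f' x) x) (hf' : ContinuousOn f' s) : ContDiffOn 𝕜 1 f s :=
  (contDiffOn_one_iff_derivWithin hs.uniqueDiffOn).2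
    ⟨fun x hx ↦ (hf x hx).differentiableAt.differentiableWithinAt,
      hf'.congr fun x hx ↦ (hf x hx).hasDerivWithinAt.derivWithin (hs.uniqueDiffOn x hx)⟩

theorem contDiffOn_sqrt_sub_sum_sq {ι : Type*} [Fintype ι] {n : WithTop ℕ∞} (a : ℝ) :
    ContDiffOn ℝ n (fun v : ι → ℝ ↦ √(a - ∑ k, v k ^ 2)) {v | ∑ k, v k ^ 2 < a} :=
  ContDiffOn.sqrt (by fun_prop) fun _ hv ↦ (sub_pos.2 hv).ne'

theorem w_global_diffeomorphism_general {E : Type*} [NormedAddCommGroup E] [NormedSpace ℝ E]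
    {n : WithTop ℕ∞} (hn : n ≠ 0) {c : ℝ} (hc : c ≠ 0) {D : Set ℝ} (hD : IsOpen D)
    (hDi : D.OrdConnected) {Φ : ℝ → ℝ} (hΦ : ContDiffOn ℝ n Φ D) (hΦ0 : ∀ ρ ∈ D, Φ ρ ≠ 0)
    (hΦ' : ∀ ρ ∈ D, deriv Φ ρ ≠ 0) {U : Set E} (hU : IsOpen U) {s : E → ℝ}
    (hs : ContDiffOn ℝ n s U) (hs0 : ∀ v ∈ U, s v ≠ 0) :
    IsDiffeoOn ℝ n
      (fun z : ℝ × E ↦ (-(c ^ 3 * Φ z.1) / s z.2 + c ^ 2, (c * Φ z.1 / s z.2) • z.2))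
      (D ×ˢ U) := by
  have hΦ_diffeo : IsDiffeoOn ℝ n Φ D :=
    .of_injOn_of_deriv_ne_zero hn hD hΦ (injOn_of_deriv_ne_zero hDi hΦ.continuousOn hΦ') hΦ'
  have hquot : IsDiffeoOn ℝ n (fun z : ℝ × E ↦ (Φ z.1 / s z.2, z.2)) (D ×ˢ U) :=
    (IsDiffeoOn.fst_div_comp_snd hU hs hs0).comp (hΦ_diffeo.prodMap (.id hU))
      fun z hz ↦ ⟨trivial, hz.2⟩
  have hcone : IsDiffeoOn ℝ n (fun z : ℝ × E ↦ (Φ z.1 / s z.2, (Φ z.1 / s z.2) • z.2)) (D ×ˢ U) :=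
    IsDiffeoOn.fst_smul_snd.comp hquot
      fun z hz ↦ ⟨div_ne_zero (hΦ0 z.1 hz.1) (hs0 z.2 hz.2), trivial⟩
  have haffine : IsDiffeoOn ℝ n
      (Prod.map (fun p : ℝ ↦ c ^ 2 + (-c ^ 3) • p) fun y : E ↦ 0 + c • y) (univ ×ˢ univ) :=
    (IsDiffeoOn.const_add_smul (c ^ 2) (neg_ne_zero.2 (pow_ne_zero 3 hc))).prodMap
      (.const_add_smul 0 hc)
  convert haffine.comp hcone fun z _ ↦ ⟨trivial, trivial⟩ using 1
  funext z
  refine Prod.ext ?_ ?_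
  · simp only [Function.comp_apply, Prod.map_apply, smul_eq_mul]
    ring
  · simp only [Function.comp_apply, Prod.map_apply, smul_smul, zero_add, mul_div_assoc]

theorem w_global_diffeomorphism (c : ℝ) (hc : 0 < c) (D : Set ℝ) (hD : IsOpen D)
    (hDi : D.OrdConnected) (Φ Φ' : ℝ → ℝ)
    (hΦpos : ∀ ρ ∈ D, 0 < Φ ρ)
    (hΦd : ∀ ρ ∈ D, HasDerivAt Φ (Φ' ρ) ρ)
    (hΦ'c : ContinuousOn Φ' D)
    (hΦ'neg : ∀ ρ ∈ D, Φ' ρ < 0) :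
    ∀ W : ℝ × (Fin 3 → ℝ) → ℝ × (Fin 3 → ℝ), ∀ Ω : Set (ℝ × (Fin 3 → ℝ)),
    W = (fun z =>
        ((-(c ^ 3 * Φ z.1) / Real.sqrt (c ^ 2 - ∑ k, z.2 k ^ 2) + c ^ 2 : ℝ),
         (fun k : Fin 3 => c * Φ z.1 * z.2 k / Real.sqrt (c ^ 2 - ∑ k, z.2 k ^ 2)))) →
    Ω = D ×ˢ {v : Fin 3 → ℝ | ∑ k, v k ^ 2 < c ^ 2} →
    ContDiffOn ℝ 1 W Ω ∧ Set.InjOn W Ω ∧ IsOpen (W '' Ω) ∧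
    ∃ g : ℝ × (Fin 3 → ℝ) → ℝ × (Fin 3 → ℝ),
      ContDiffOn ℝ 1 g (W '' Ω) ∧
      (∀ z ∈ Ω, g (W z) = z) ∧ (∀ y ∈ W '' Ω, W (g y) = y) := by
  rintro W Ω rfl rfl
  have hW := w_global_diffeomorphism_general one_ne_zero hc.ne' hD hDi
    (contDiffOn_one_of_hasDerivAt hD hΦd hΦ'c) (fun ρ hρ ↦ (hΦpos ρ hρ).ne')
    (fun ρ hρ ↦ (hΦd ρ hρ).deriv ▸ (hΦ'neg ρ hρ).ne)
    (isOpen_lt (by fun_prop) continuous_const) (contDiffOn_sqrt_sub_sum_sq (ι := Fin 3) (c ^ 2))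
    fun v hv ↦ (Real.sqrt_pos.2 (sub_pos.2 hv)).ne'
  simp only [Pi.smul_def, smul_eq_mul, div_mul_eq_mul_div] at hW
  obtain ⟨g, hg, hgW⟩ := hW.exists_leftInvOn
  exact ⟨hW.contDiffOn, hW.injOn, hW.isOpen_image, g, hg, hgW, hgW.rightInvOn_image⟩
end
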